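/- Let f : ℝ → ℝ be continuous, let F : ℝ → ℝ be an antiderivative of f (HasDerivAt F (f x) x for all x), and let g : ℝ → ℝ be twice continuously differentiable on an interval [a,b] with g'(x) ≠ 0 for all x ∈ [a,b]. Then ∫_a^b f(g(x)) dx = F(g(b))/g'(b) − F(g(a))/g'(a) + ∫_a^b F(g(x))·g''(x)/(g'(x))² dx. -/

import Mathlib

open Real MeasureTheory intervalIntegral

/-!
Integrate by parts the factorisation `f (g x) = (g' x)⁻¹ • (g' x • f (g x))`: by the chain rule the
second factor is the derivative of `F ∘ g`. Nothing else about `F ∘ g` enters, so the same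
computation applies to any primitive `G` of a product `p • h`.
-/

section

open Set
open scoped Interval

variable {𝕜 E : Type*} [NontriviallyNormedField 𝕜] [NormedAlgebra ℝ 𝕜]
  [NormedAddCommGroup E] [NormedSpace 𝕜 E] [NormedSpace ℝ E] [IsScalarTower ℝ 𝕜 E]
  [CompleteSpace E] {a b : ℝ}

theorem integral_eq_inv_smul_sub_add_of_hasDerivWithinAt_smul {p p' : ℝ → 𝕜} {G h : ℝ → E}
    (hG : ∀ x ∈ [[a, b]], HasDerivWithinAt G (p x • h x) [[a, b]] x)
    (hp : ∀ x ∈ [[a, b]], HasDerivWithinAt p (p' x) [[a, b]] x)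
    (hh : IntervalIntegrable h volume a b) (hp' : IntervalIntegrable p' volume a b)
    (hp₀ : ∀ x ∈ [[a, b]], p x ≠ 0) :
    ∫ x in a..b, h x =
      (p b)⁻¹ • G b - (p a)⁻¹ • G a + ∫ x in a..b, (p' x / p x ^ 2) • G x := by
  have hp_cont : ContinuousOn p [[a, b]] := HasDerivWithinAt.continuousOn hp
  have hp_inv (x) (hx : x ∈ [[a, b]]) :
      HasDerivWithinAt (fun t ↦ (p t)⁻¹) (-(p' x / p x ^ 2)) [[a, b]] x := by
    simpa only [neg_div] using (hp x hx).fun_inv (hp₀ x hx)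
  have hp_inv_int : IntervalIntegrable (fun x ↦ -(p' x / p x ^ 2)) volume a b := by
    simp only [div_eq_mul_inv]
    exact (hp'.mul_continuousOn <|
      (hp_cont.pow 2).inv₀ fun x hx ↦ pow_ne_zero 2 (hp₀ x hx)).neg
  calc ∫ x in a..b, h x = ∫ x in a..b, (p x)⁻¹ • (p x • h x) :=
        integral_congr fun x hx ↦ (inv_smul_smul₀ (hp₀ x hx) (h x)).symm
    _ = (p b)⁻¹ • G b - (p a)⁻¹ • G a - ∫ x in a..b, -(p' x / p x ^ 2) • G x :=
        integral_smul_deriv_eq_deriv_smul_of_hasDerivWithinAt hp_inv hG hp_inv_int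
          (hh.continuousOn_smul hp_cont)
    _ = (p b)⁻¹ • G b - (p a)⁻¹ • G a + ∫ x in a..b, (p' x / p x ^ 2) • G x := by
        simp only [neg_smul, intervalIntegral.integral_neg, sub_neg_eq_add]

theorem stmt_1_general {s : Set 𝕜} {f F : 𝕜 → E} {g g' g'' : ℝ → 𝕜}
    (hF : ∀ y ∈ s, HasDerivWithinAt F (f y) s y)
    (hg : ∀ x ∈ [[a, b]], HasDerivWithinAt g (g' x) [[a, b]] x)
    (hg' : ∀ x ∈ [[a, b]], HasDerivWithinAt g' (g'' x) [[a, b]] x)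
    (hgs : MapsTo g [[a, b]] s)
    (hfg : IntervalIntegrable (fun x ↦ f (g x)) volume a b)
    (hg'' : IntervalIntegrable g'' volume a b)
    (hne : ∀ x ∈ [[a, b]], g' x ≠ 0) :
    ∫ x in a..b, f (g x) =
      (g' b)⁻¹ • F (g b) - (g' a)⁻¹ • F (g a) +
        ∫ x in a..b, (g'' x / g' x ^ 2) • F (g x) :=
  integral_eq_inv_smul_sub_add_of_hasDerivWithinAt_smul
    (fun x hx ↦ (hF (g x) (hgs hx)).scomp x (hg x hx) hgs) hg' hfg hg'' hne

end

theorem stmt_1 (f F g g' g'' : ℝ → ℝ) (a b : ℝ) (hab : a ≤ b)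
    (hf : Continuous f)
    (hF : ∀ y, HasDerivAt F (f y) y)
    (hg : ∀ y ∈ Set.Icc a b, HasDerivAt g (g' y) y)
    (hg' : ∀ y ∈ Set.Icc a b, HasDerivAt g' (g'' y) y)
    (hg'' : ContinuousOn g'' (Set.Icc a b))
    (hne : ∀ y ∈ Set.Icc a b, g' y ≠ 0) :
    ∫ x in a..b, f (g x) =
      F (g b) / g' b - F (g a) / g' a +
        ∫ x in a..b, F (g x) * g'' x / (g' x) ^ 2 := by
  rw [← Set.uIcc_of_le hab] at hg hg' hg'' hne
  simpa only [smul_eq_mul, div_eq_mul_inv, mul_comm, mul_left_comm, mul_assoc] using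
    stmt_1_general (fun y _ ↦ (hF y).hasDerivWithinAt) (fun x hx ↦ (hg x hx).hasDerivWithinAt)
      (fun x hx ↦ (hg' x hx).hasDerivWithinAt) (Set.mapsTo_univ g _)
      (hf.comp_continuousOn (HasDerivAt.continuousOn hg)).intervalIntegrable
      hg''.intervalIntegrable hne
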